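/- Let α, β, γ ∈ ℂ with none of α, β, γ a nonpositive integer, and let k ∈ (0,1). Define f̃_{m,n} as in the context, with the conventions f̃_{−1,ℓ} := 0 and f̃_{m,n} := 0 for m > n. Then for every n ≥ 1 and every m with 0 ≤ m ≤ n+1: −n(n−1+α)·( f̃_{m,n} − f̃_{m,n−1} ) + (1/k²)·f̃_{m−1,n} + ( (n+β)(n+γ)/k² )·( f̃_{m,n+1} − f̃_{m,n} ) = 0. -/

import Mathlib

/-- The Pochhammer symbol `(x)_n = x(x+1)⋯(x+n-1)`. -/
noncomputable def poch (x : ℂ) (n : ℕ) : ℂ := ∏ i ∈ Finset.range n, (x + (i : ℂ))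

/-- The index set of tuples `(ℓ_1, j_1, …, ℓ_m, j_m)` with
`0 ≤ ℓ_1 ≤ j_1 < ℓ_2 ≤ j_2 < ⋯ < ℓ_m ≤ j_m < n`, encoded as pairs of functions
`(ℓ, j) : (Fin m → Fin n) × (Fin m → Fin n)`. -/
def heunIdx (m n : ℕ) : Finset ((Fin m → Fin n) × (Fin m → Fin n)) :=
  Finset.univ.filter fun p =>
    (∀ s : Fin m, (p.1 s : ℕ) ≤ (p.2 s : ℕ)) ∧
    (∀ s t : Fin m, (s : ℕ) + 1 = (t : ℕ) → (p.2 s : ℕ) < (p.1 t : ℕ))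

/-- The coefficients `f̃_{m,n}` for the case `δ = β + 1`: `f̃_{0,n} = 1`; for
`1 ≤ m ≤ n`, `f̃_{m,n} = (-1)^m Σ ∏_{s=1}^m [j_s!(α)_{j_s}(β)_{ℓ_s}(γ)_{ℓ_s} /
(ℓ_s!(α)_{ℓ_s}(β)_{j_s+1}(γ)_{j_s+1})] k^{2(j_s-ℓ_s)}`, the sum running over
`heunIdx m n`; and `f̃_{m,n} = 0` for `m < 0` or `m > n`. -/
noncomputable def heunft (k : ℝ) (α β γ : ℂ) (m : ℤ) (n : ℕ) : ℂ :=
  if m = 0 then 1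
  else if m < 0 ∨ (n : ℤ) < m then 0
  else (-1 : ℂ) ^ m.toNat *
    ∑ p ∈ heunIdx m.toNat n, ∏ s : Fin m.toNat,
      ((Nat.factorial (p.2 s : ℕ) : ℂ) * poch α (p.2 s : ℕ) * poch β (p.1 s : ℕ) *
          poch γ (p.1 s : ℕ)) /
        ((Nat.factorial (p.1 s : ℕ) : ℂ) * poch α (p.1 s : ℕ) * poch β ((p.2 s : ℕ) + 1) *
          poch γ ((p.2 s : ℕ) + 1)) *
      (k : ℂ) ^ ((2 : ℤ) * (((p.2 s : ℕ) : ℤ) - ((p.1 s : ℕ) : ℤ)))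

/-- The Taylor coefficients `c̃_n = ((β)_n / n!) Σ_{m=0}^n f̃_{m,n} wᵐ` of the local
Heun solution for `δ = β + 1`. -/
noncomputable def heunct (k : ℝ) (α β γ w : ℂ) (n : ℕ) : ℂ :=
  poch β n / (Nat.factorial n : ℂ) *
    ∑ m ∈ Finset.range (n + 1), heunft k α β γ (m : ℤ) n * w ^ m

/-! The weight of a pair `ℓ ≤ j` satisfies a first-order recurrence in `j`, and its diagonal value
at `ℓ = j = n` is `1 / ((n+β)(n+γ))`. Splitting off the last pair `(ℓ_m, j_m)` writes
`f̃_{m,n+1} - f̃_{m,n}` as `-∑_{ℓ ≤ n}` of the weight of `(ℓ, n)` times `f̃_{m-1,ℓ}`. After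
multiplication by `(n+β)(n+γ)`, the recurrence turns the terms with `ℓ < n` into those of
`f̃_{m,n} - f̃_{m,n-1}`, and the diagonal term `ℓ = n` leaves `-f̃_{m-1,n}`. -/

section IndexSet

variable {m n : ℕ}

lemma mem_heunIdx {p : (Fin m → Fin n) × (Fin m → Fin n)} :
    p ∈ heunIdx m n ↔ (∀ s, p.1 s ≤ p.2 s) ∧ ∀ s t, s < t → p.2 s < p.1 t := by
  simp only [heunIdx, Finset.mem_filter, Finset.mem_univ, true_and, Fin.val_fin_le,
    Fin.val_fin_lt]
  refine and_congr_right fun hle => ⟨fun hlt s t hst => ?_, fun hlt s t hst => hlt s t (by omega)⟩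
  obtain _ | m := m
  · exact s.elim0
  have hmono : StrictMono p.2 := Fin.strictMono_iff_lt_succ.2 fun r =>
    (hlt r.castSucc r.succ (by simp)).trans_le (hle r.succ)
  obtain ⟨r, rfl⟩ := Fin.exists_succ_eq.2 (Fin.ne_zero_of_lt hst)
  exact (hmono.monotone (Fin.le_castSucc_iff.2 hst)).trans_lt (hlt r.castSucc r.succ (by simp))

lemma heunIdx_eq_empty_of_lt (h : n < m) : heunIdx m n = ∅ := by
  refine Finset.eq_empty_of_forall_notMem fun p hp => h.not_ge ?_
  obtain ⟨hle, hlt⟩ := mem_heunIdx.1 hp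
  have hmono : StrictMono p.2 := fun s t hst => (hlt s t hst).trans_le (hle t)
  simpa only [Fintype.card_fin] using Fintype.card_le_of_injective p.2 hmono.injective

lemma heunIdx_zero_left : heunIdx 0 n = Finset.univ :=
  Finset.eq_univ_of_forall fun _ => mem_heunIdx.2 ⟨fun s => s.elim0, fun s => s.elim0⟩

/-- The tuple `(ℓ_1, j_1, …, ℓ_m, j_m, l, j)` obtained by appending a last pair `l ≤ j < n` to a
tuple with entries below `l`; the inequality `l ≤ j` is encoded in the type of `l`. -/
def heunIdxSnoc (j : Fin n) (l : Fin (j + 1)) (p : (Fin m → Fin l) × (Fin m → Fin l)) :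
    (Fin (m + 1) → Fin n) × (Fin (m + 1) → Fin n) :=
  have hln : (l : ℕ) < n := l.isLt.trans_le j.isLt
  (Fin.snoc (α := fun _ => Fin n) (fun s => (p.1 s).castLE hln.le) ⟨l, hln⟩,
    Fin.snoc (α := fun _ => Fin n) (fun s => (p.2 s).castLE hln.le) j)

section Snoc

variable (j : Fin n) (l : Fin (j + 1)) (p : (Fin m → Fin l) × (Fin m → Fin l))

@[simp]
lemma heunIdxSnoc_fst_castSucc (s : Fin m) :
    ((heunIdxSnoc j l p).1 s.castSucc : ℕ) = p.1 s := by
  simp [heunIdxSnoc]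

@[simp]
lemma heunIdxSnoc_snd_castSucc (s : Fin m) :
    ((heunIdxSnoc j l p).2 s.castSucc : ℕ) = p.2 s := by
  simp [heunIdxSnoc]

@[simp]
lemma heunIdxSnoc_fst_last : ((heunIdxSnoc j l p).1 (Fin.last m) : ℕ) = l := by
  simp [heunIdxSnoc]

@[simp]
lemma heunIdxSnoc_snd_last : (heunIdxSnoc j l p).2 (Fin.last m) = j := by
  simp [heunIdxSnoc]

end Snoc

lemma heunIdxSnoc_mem (j : Fin n) (l : Fin (j + 1)) {p : (Fin m → Fin l) × (Fin m → Fin l)}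
    (hp : p ∈ heunIdx m l) : heunIdxSnoc j l p ∈ heunIdx (m + 1) n := by
  obtain ⟨hle, hlt⟩ := mem_heunIdx.1 hp
  refine mem_heunIdx.2 ⟨fun s => ?_, fun s t hst => ?_⟩
  · cases s using Fin.lastCases with
    | last => exact Fin.le_def.2 (by simpa using Nat.le_of_lt_succ l.isLt)
    | cast s => exact Fin.le_def.2 (by simpa using hle s)
  · cases s using Fin.lastCases with
    | last => exact absurd hst (Fin.le_last t).not_gt
    | cast s =>
      cases t using Fin.lastCases with
      | last => exact Fin.lt_def.2 (by simp)
      | cast t => exact Fin.lt_def.2 (by simpa using hlt s t (by simpa using hst))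

lemma heunIdxSnoc_injective :
    Function.Injective fun x : Σ j : Fin n, Σ l : Fin (j + 1),
      (Fin m → Fin l) × (Fin m → Fin l) => heunIdxSnoc x.1 x.2.1 x.2.2 := by
  rintro ⟨j, l, p⟩ ⟨j', l', p'⟩ h
  have hfst (s : Fin (m + 1)) := congrArg (fun q => (q.1 s : ℕ)) h
  have hsnd (s : Fin (m + 1)) := congrArg (fun q => (q.2 s : ℕ)) h
  obtain rfl : j = j' := Fin.ext (by simpa using hsnd (Fin.last m))
  obtain rfl : l = l' := Fin.ext (by simpa using hfst (Fin.last m))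
  obtain rfl : p = p' := Prod.ext
    (funext fun s => Fin.ext (by simpa using hfst s.castSucc))
    (funext fun s => Fin.ext (by simpa using hsnd s.castSucc))
  rfl

lemma exists_heunIdxSnoc_eq {q : (Fin (m + 1) → Fin n) × (Fin (m + 1) → Fin n)}
    (hq : q ∈ heunIdx (m + 1) n) :
    ∃ (j : Fin n) (l : Fin (j + 1)), ∃ p ∈ heunIdx m l, heunIdxSnoc j l p = q := by
  obtain ⟨hle, hlt⟩ := mem_heunIdx.1 hq
  have hsnd (s : Fin m) : q.2 s.castSucc < q.1 (Fin.last m) := hlt _ _ s.castSucc_lt_last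
  have hfst (s : Fin m) : q.1 s.castSucc < q.1 (Fin.last m) := (hle _).trans_lt (hsnd s)
  refine ⟨q.2 (Fin.last m), ⟨q.1 (Fin.last m), Nat.lt_succ_of_le (hle _)⟩,
    (fun s => ⟨q.1 s.castSucc, hfst s⟩, fun s => ⟨q.2 s.castSucc, hsnd s⟩), ?_, ?_⟩
  · exact mem_heunIdx.2 ⟨fun s => hle s.castSucc, fun s t hst => hlt s.castSucc t.castSucc hst⟩
  · refine Prod.ext (funext fun s => Fin.ext ?_) (funext fun s => Fin.ext ?_) <;>
      cases s using Fin.lastCases <;> simp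

end IndexSet

section IndexSum

variable {R : Type*}

/-- The sum over `heunIdx m n` of the products of the weights `W ℓ_s j_s`; up to sign,
`f̃_{m,n}` is such a sum. -/
def heunIdxSum [CommSemiring R] (W : ℕ → ℕ → R) (m n : ℕ) : R :=
  ∑ p ∈ heunIdx m n, ∏ s, W (p.1 s) (p.2 s)

section CommSemiring

variable [CommSemiring R] (W : ℕ → ℕ → R)

lemma heunIdxSum_zero_left (n : ℕ) : heunIdxSum W 0 n = 1 := by
  simp [heunIdxSum, heunIdx_zero_left]

lemma heunIdxSum_eq_zero_of_lt {m n : ℕ} (h : n < m) : heunIdxSum W m n = 0 := by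
  rw [heunIdxSum, heunIdx_eq_empty_of_lt h, Finset.sum_empty]

lemma heunIdxSum_succ_left (m n : ℕ) :
    heunIdxSum W (m + 1) n =
      ∑ j ∈ Finset.range n, ∑ l ∈ Finset.range (j + 1), W l j * heunIdxSum W m l := by
  simp only [heunIdxSum, Finset.sum_range, Finset.mul_sum]
  simp only [Finset.sum_sigma']
  symm
  refine Finset.sum_bij (fun x _ => heunIdxSnoc x.1 x.2.1 x.2.2) ?mem
    (fun _ _ _ _ h => heunIdxSnoc_injective h) ?surj ?prod
  case mem =>
    rintro ⟨j, l, p⟩ hx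
    exact heunIdxSnoc_mem j l (by simpa using hx)
  case surj =>
    intro q hq
    obtain ⟨j, l, p, hp, hpq⟩ := exists_heunIdxSnoc_eq hq
    exact ⟨⟨j, l, p⟩, by simpa using hp, hpq⟩
  case prod =>
    rintro ⟨j, l, p⟩ -
    simp [Fin.prod_univ_castSucc, mul_comm]

lemma heunIdxSum_succ_succ (m n : ℕ) :
    heunIdxSum W (m + 1) (n + 1) =
      heunIdxSum W (m + 1) n + ∑ l ∈ Finset.range (n + 1), W l n * heunIdxSum W m l := by
  rw [heunIdxSum_succ_left, heunIdxSum_succ_left, Finset.sum_range_succ]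

end CommSemiring

lemma mul_heunIdxSum_sub_of_recurrence [CommRing R] {W : ℕ → ℕ → R} {n : ℕ} {a b : R}
    (hdiag : a * W n n = 1) (hrec : ∀ l < n, a * W l n = b * W l (n - 1)) (m : ℕ) :
    a * (heunIdxSum W (m + 1) (n + 1) - heunIdxSum W (m + 1) n) =
      heunIdxSum W m n + b * (heunIdxSum W (m + 1) n - heunIdxSum W (m + 1) (n - 1)) := by
  have hlower : ∑ l ∈ Finset.range n, W l (n - 1) * heunIdxSum W m l =
      heunIdxSum W (m + 1) n - heunIdxSum W (m + 1) (n - 1) := by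
    cases n with
    | zero => simp
    | succ n => rw [heunIdxSum_succ_succ, Nat.add_sub_cancel, add_sub_cancel_left]
  calc a * (heunIdxSum W (m + 1) (n + 1) - heunIdxSum W (m + 1) n)
      = ∑ l ∈ Finset.range n, a * W l n * heunIdxSum W m l + a * W n n * heunIdxSum W m n := by
        simp only [heunIdxSum_succ_succ, add_sub_cancel_left, Finset.sum_range_succ, mul_add,
          Finset.mul_sum, mul_assoc]
    _ = ∑ l ∈ Finset.range n, b * W l (n - 1) * heunIdxSum W m l + heunIdxSum W m n := by
        rw [hdiag, one_mul, Finset.sum_congr rfl fun l hl => by rw [hrec l (Finset.mem_range.1 hl)]]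
    _ = heunIdxSum W m n + b * (heunIdxSum W (m + 1) n - heunIdxSum W (m + 1) (n - 1)) := by
        simp only [← hlower, Finset.mul_sum, mul_assoc, add_comm]

end IndexSum

section Weight

lemma poch_succ (x : ℂ) (n : ℕ) : poch x (n + 1) = poch x n * (n + x) := by
  rw [poch, Finset.prod_range_succ, add_comm x, poch]

lemma natCast_add_ne_zero {x : ℂ} (hx : ∀ j : ℕ, x ≠ -(j : ℂ)) (n : ℕ) : (n : ℂ) + x ≠ 0 :=
  fun h => hx n (eq_neg_of_add_eq_zero_right h)

lemma poch_ne_zero {x : ℂ} (hx : ∀ j : ℕ, x ≠ -(j : ℂ)) (n : ℕ) : poch x n ≠ 0 :=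
  Finset.prod_ne_zero_iff.2 fun i _ => add_comm x i ▸ natCast_add_ne_zero hx i

/-- The factor contributed by a pair `(ℓ_s, j_s) = (l, j)` to the summands of `f̃_{m,n}`. -/
noncomputable def heunWeight (k α β γ : ℂ) (l j : ℕ) : ℂ :=
  (j.factorial * poch α j * poch β l * poch γ l) /
      (l.factorial * poch α l * poch β (j + 1) * poch γ (j + 1)) *
    k ^ ((2 : ℤ) * ((j : ℤ) - (l : ℤ)))

lemma mul_heunWeight_self (k : ℂ) {α β γ : ℂ} {n : ℕ} (hα : poch α n ≠ 0)
    (hβ : poch β (n + 1) ≠ 0) (hγ : poch γ (n + 1) ≠ 0) :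
    (n + β) * (n + γ) * heunWeight k α β γ n n = 1 := by
  have hfact : (n.factorial : ℂ) ≠ 0 := Nat.cast_ne_zero.2 n.factorial_ne_zero
  rw [poch_succ, mul_ne_zero_iff] at hβ hγ
  obtain ⟨hβ, hβn⟩ := hβ
  obtain ⟨hγ, hγn⟩ := hγ
  simp only [heunWeight, poch_succ, sub_self, mul_zero, zpow_zero]
  field_simp

lemma mul_heunWeight_succ_right {k β γ : ℂ} {j : ℕ} (hk : k ≠ 0) (α : ℂ)
    (hβ : ((j + 1 : ℕ) : ℂ) + β ≠ 0) (hγ : ((j + 1 : ℕ) : ℂ) + γ ≠ 0) (l : ℕ) :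
    (((j + 1 : ℕ) : ℂ) + β) * (((j + 1 : ℕ) : ℂ) + γ) * heunWeight k α β γ l (j + 1) =
      ((j + 1 : ℕ) : ℂ) * (j + α) * k ^ 2 * heunWeight k α β γ l j := by
  have hpow : k ^ ((2 : ℤ) * (((j + 1 : ℕ) : ℤ) - l)) = k ^ ((2 : ℤ) * ((j : ℤ) - l)) * k ^ 2 := by
    rw [← zpow_natCast k 2, ← zpow_add₀ hk]
    push_cast
    ring_nf
  simp only [heunWeight, hpow, poch_succ β (j + 1), poch_succ γ (j + 1), poch_succ α j,
    Nat.factorial_succ, Nat.cast_mul]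
  field_simp

end Weight

lemma heunft_natCast (k : ℝ) (α β γ : ℂ) (m n : ℕ) :
    heunft k α β γ m n = (-1) ^ m * heunIdxSum (heunWeight k α β γ) m n := by
  unfold heunft
  split_ifs with hzero hlt
  · obtain rfl : m = 0 := Int.natCast_eq_zero.1 hzero
    rw [heunIdxSum_zero_left, pow_zero, one_mul]
  · rw [heunIdxSum_eq_zero_of_lt _ (by omega), mul_zero]
  · rfl

theorem heunft_combined_difference_identity_general (k : ℝ) (hk : k ≠ 0) (α β γ : ℂ)
    (hα : ∀ j : ℕ, α ≠ -(j : ℂ)) (hβ : ∀ j : ℕ, β ≠ -(j : ℂ)) (hγ : ∀ j : ℕ, γ ≠ -(j : ℂ))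
    (n m : ℕ) :
    -(n : ℂ) * ((n : ℂ) - 1 + α) *
        (heunft k α β γ (m : ℤ) n - heunft k α β γ (m : ℤ) (n - 1)) +
      1 / (k : ℂ) ^ 2 * heunft k α β γ ((m : ℤ) - 1) n +
      ((n : ℂ) + β) * ((n : ℂ) + γ) / (k : ℂ) ^ 2 *
        (heunft k α β γ (m : ℤ) (n + 1) - heunft k α β γ (m : ℤ) n) = 0 := by
  have hk' : (k : ℂ) ≠ 0 := Complex.ofReal_ne_zero.2 hk
  obtain _ | m := m
  · simp [heunft]
  have hdiag : (n + β) * (n + γ) * heunWeight k α β γ n n = 1 :=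
    mul_heunWeight_self k (poch_ne_zero hα n) (poch_ne_zero hβ (n + 1)) (poch_ne_zero hγ (n + 1))
  have hrec : ∀ l < n, (n + β) * (n + γ) * heunWeight k α β γ l n =
      n * (n - 1 + α) * k ^ 2 * heunWeight k α β γ l (n - 1) := by
    intro l hl
    obtain ⟨j, rfl⟩ := Nat.exists_eq_add_one_of_ne_zero (Nat.ne_zero_of_lt hl)
    simpa using mul_heunWeight_succ_right hk' α (natCast_add_ne_zero hβ (j + 1))
      (natCast_add_ne_zero hγ (j + 1)) l
  have hdiff := mul_heunIdxSum_sub_of_recurrence hdiag hrec m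
  rw [show ((m + 1 : ℕ) : ℤ) - 1 = m by simp]
  simp only [heunft_natCast]
  field_simp
  linear_combination (-1) ^ (m + 1) * hdiff

/-- The combined difference identity
`-n(n-1+α)(f̃_{m,n} - f̃_{m,n-1}) + (1/k²) f̃_{m-1,n}
+ ((n+β)(n+γ)/k²)(f̃_{m,n+1} - f̃_{m,n}) = 0` for `n ≥ 1`, `0 ≤ m ≤ n+1`. -/
theorem heunft_combined_difference_identity (k : ℝ) (hk0 : 0 < k) (hk1 : k < 1)
    (α β γ : ℂ)
    (hα : ∀ j : ℕ, α ≠ -(j : ℂ)) (hβ : ∀ j : ℕ, β ≠ -(j : ℂ))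
    (hγ : ∀ j : ℕ, γ ≠ -(j : ℂ)) :
    ∀ n : ℕ, 1 ≤ n → ∀ m : ℕ, m ≤ n + 1 →
      -(n : ℂ) * ((n : ℂ) - 1 + α) *
          (heunft k α β γ (m : ℤ) n - heunft k α β γ (m : ℤ) (n - 1)) +
        1 / (k : ℂ) ^ 2 * heunft k α β γ ((m : ℤ) - 1) n +
        ((n : ℂ) + β) * ((n : ℂ) + γ) / (k : ℂ) ^ 2 *
          (heunft k α β γ (m : ℤ) (n + 1) - heunft k α β γ (m : ℤ) n) = 0 :=
  fun n _ m _ => heunft_combined_difference_identity_general k hk0.ne' α β γ hα hβ hγ n m
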